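/- Let m, n, N be natural numbers, let a₀, …, a_N ∈ ℂ, and let f(z) = ∑_{k=0}^{N} a_k·z^k. Then for every z ∈ ℂ, (T_{w ↦ conj(w)^n} f)(z) = ∑_{k=n}^{N} a_k·((k+m)!/(k+m−n)!)·z^{k−n} (the sum being empty, hence 0, when n > N). -/

import Mathlib

/-!
The weight `|w|^{2m} e^{-|w|²}` is invariant under rotations, so the moment
`∫ w^p conj(w)^q |w|^{2m} e^{-|w|²}` vanishes for `p ≠ q`; for `p = q` it is the Gamma integral
`π (p + m)!`. Integrating the kernel series term by term against `w^k conj(w)^n`, only the index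
`j = k - n` survives, and its coefficient `m! / (k - n + m)!` times `π (k + m)!` gives the claimed
factor. The exchange of sum and integral is dominated convergence: since `m! / (j + m)! ≤ 1 / j!`,
the kernel series is dominated by the exponential series of `|z| |w|`, against which the Gaussian
weight remains integrable.
-/

open MeasureTheory Complex ComplexOrder

/-- Weight function: `|z|^{2m} e^{-|z|^2}` as a complex number. -/
noncomputable def fsWt (m : ℕ) (z : ℂ) : ℂ :=
  ((‖z‖ : ℝ) : ℂ) ^ (2 * m) * ((Real.exp (-‖z‖ ^ 2) : ℝ) : ℂ)

/-- Fock–Sobolev reproducing kernel `K_m(z,w)`. -/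
noncomputable def fsKernel (m : ℕ) (z w : ℂ) : ℂ :=
  ∑' j : ℕ, ((m.factorial : ℂ) / ((j + m).factorial : ℂ)) * (z * starRingEnd ℂ w) ^ j

/-- Toeplitz operator with symbol `ψ` acting on `f`, evaluated at `z`. -/
noncomputable def fsToeplitz (m : ℕ) (ψ f : ℂ → ℂ) (z : ℂ) : ℂ :=
  (1 / ((Real.pi : ℂ) * (m.factorial : ℂ))) *
    ∫ w : ℂ, ψ w * f w * fsKernel m z w * fsWt m w

/-- Fock–Sobolev pairing `⟨g, h⟩`. -/
noncomputable def fsPair (m : ℕ) (g h : ℂ → ℂ) : ℂ :=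
  ∫ z : ℂ, g z * starRingEnd ℂ (h z) * fsWt m z

/-- `‖g‖² = ⟨g, g⟩`. -/
noncomputable def fsNormSq (m : ℕ) (g : ℂ → ℂ) : ℂ := fsPair m g g

section GaussianWeight

variable {E : Type*} [NormedAddCommGroup E] [NormedSpace ℝ E] [FiniteDimensional ℝ E]
  [Nontrivial E] [MeasurableSpace E] [BorelSpace E] (μ : Measure E) [μ.IsAddHaarMeasure]

lemma integrable_norm_pow_mul_exp_neg_mul_norm_sq (s : ℕ) {b : ℝ} (hb : 0 < b) :
    Integrable (fun x : E => ‖x‖ ^ s * Real.exp (-b * ‖x‖ ^ 2)) μ := by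
  rw [integrable_fun_norm_addHaar μ (f := fun t => t ^ s * Real.exp (-b * t ^ 2))]
  have h := integrable_rpow_mul_exp_neg_mul_sq hb (s := ((Module.finrank ℝ E - 1 + s : ℕ) : ℝ))
    (neg_one_lt_zero.trans_le (Nat.cast_nonneg _))
  simp only [Real.rpow_natCast, pow_add, mul_assoc] at h
  exact h.integrableOn

lemma integrable_norm_pow_mul_exp_sub_mul_norm_sq (s : ℕ) (r : ℝ) {b : ℝ} (hb : 0 < b) :
    Integrable (fun x : E => ‖x‖ ^ s * Real.exp (r * ‖x‖ - b * ‖x‖ ^ 2)) μ := by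
  have gaussian := integrable_norm_pow_mul_exp_neg_mul_norm_sq μ s (half_pos hb)
  refine (gaussian.const_mul (Real.exp (r ^ 2 / (2 * b)))).mono'
    (Continuous.aestronglyMeasurable (by fun_prop)) (.of_forall fun x => ?_)
  have complete_square : r * ‖x‖ - b * ‖x‖ ^ 2 ≤ r ^ 2 / (2 * b) + -(b / 2) * ‖x‖ ^ 2 := by
    have h : r ^ 2 / (2 * b) + -(b / 2) * ‖x‖ ^ 2 - (r * ‖x‖ - b * ‖x‖ ^ 2)
        = (r - b * ‖x‖) ^ 2 / (2 * b) := by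
      field_simp
      ring
    linarith [show 0 ≤ (r - b * ‖x‖) ^ 2 / (2 * b) by positivity]
  calc ‖‖x‖ ^ s * Real.exp (r * ‖x‖ - b * ‖x‖ ^ 2)‖
      = ‖x‖ ^ s * Real.exp (r * ‖x‖ - b * ‖x‖ ^ 2) := Real.norm_of_nonneg (by positivity)
    _ ≤ ‖x‖ ^ s * Real.exp (r ^ 2 / (2 * b) + -(b / 2) * ‖x‖ ^ 2) := by gcongr
    _ = Real.exp (r ^ 2 / (2 * b)) * (‖x‖ ^ s * Real.exp (-(b / 2) * ‖x‖ ^ 2)) := by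
      rw [Real.exp_add]
      ring

lemma integral_norm_pow_two_mul_mul_exp_neg_norm_sq (s : ℕ) :
    ∫ w : ℂ, ‖w‖ ^ (2 * s) * Real.exp (-‖w‖ ^ 2) = Real.pi * s.factorial := by
  have h := Complex.integral_rpow_mul_exp_neg_rpow (p := 2) (q := ((2 * s : ℕ) : ℝ))
    (by norm_num) (by linarith [Nat.cast_nonneg (α := ℝ) (2 * s)])
  have gamma_arg : (((2 * s : ℕ) : ℝ) + 2) / 2 = s + 1 := by
    push_cast
    ring
  simp only [Real.rpow_natCast, Real.rpow_ofNat] at h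
  rw [h, gamma_arg, Real.Gamma_nat_eq_factorial]
  ring

end GaussianWeight

section RotationInvariance

lemma integral_eq_zero_of_rotation {E : Type*} [NormedAddCommGroup E] [NormedSpace ℂ E]
    {F : ℂ → E} {c : Circle} {u : ℂ} (hu : u ≠ 1) (hF : ∀ w, F (c * w) = u • F w) :
    ∫ w, F w = 0 := by
  have h : ∫ w, F w = u • ∫ w, F w := by
    rw [← integral_smul, ← (rotation c).measurePreserving.integral_comp
      (rotation c).toHomeomorph.measurableEmbedding F]
    simp only [rotation_apply, hF]
  exact (smul_eq_zero.mp (show (1 - u) • ∫ w, F w = 0 by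
    rw [sub_smul, one_smul, ← h, sub_self])).resolve_left (sub_ne_zero.mpr hu.symm)

lemma exists_circle_zpow_eq_neg_one {d : ℤ} (hd : d ≠ 0) : ∃ c : Circle, (c : ℂ) ^ d = -1 := by
  refine ⟨Circle.exp (Real.pi / d), ?_⟩
  have hd' : (d : ℂ) ≠ 0 := Int.cast_ne_zero.mpr hd
  rw [Circle.coe_exp, ← Complex.exp_int_mul, ← Complex.exp_pi_mul_I]
  congr 1
  push_cast
  field_simp

lemma integral_pow_mul_conj_pow_mul_radial_eq_zero (φ : ℝ → ℂ) {p q : ℕ} (hpq : p ≠ q) :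
    ∫ w : ℂ, w ^ p * starRingEnd ℂ w ^ q * φ ‖w‖ = 0 := by
  obtain ⟨c, hc⟩ := exists_circle_zpow_eq_neg_one
    (sub_ne_zero.mpr (Nat.cast_injective.ne hpq) : (p : ℤ) - q ≠ 0)
  have hc' : (c : ℂ) ^ p * starRingEnd ℂ (c : ℂ) ^ q = -1 := by
    rw [← hc, zpow_sub₀ c.coe_ne_zero, zpow_natCast, zpow_natCast, ← Circle.coe_inv_eq_conj,
      Circle.coe_inv, inv_pow, div_eq_mul_inv]
  refine integral_eq_zero_of_rotation (c := c) (u := -1) (by norm_num) fun w => ?_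
  rw [norm_mul, Circle.norm_coe, one_mul, map_mul, mul_pow, mul_pow, ← hc', smul_eq_mul]
  ring

end RotationInvariance

section Weight

variable (m : ℕ)

@[fun_prop]
lemma continuous_fsWt : Continuous (fsWt m) := by
  unfold fsWt
  fun_prop

lemma norm_fsWt (w : ℂ) : ‖fsWt m w‖ = ‖w‖ ^ (2 * m) * Real.exp (-‖w‖ ^ 2) := by
  rw [fsWt, norm_mul, norm_pow, Complex.norm_real, Complex.norm_real, norm_norm,
    Real.norm_of_nonneg (Real.exp_nonneg _)]

lemma integrable_norm_pow_mul_conj_pow_mul_fsWt_mul_exp (p q : ℕ) (r : ℝ) :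
    Integrable fun w : ℂ =>
      ‖w ^ p * starRingEnd ℂ w ^ q * fsWt m w‖ * Real.exp (r * ‖w‖) := by
  refine (integrable_norm_pow_mul_exp_sub_mul_norm_sq volume (p + q + 2 * m) r one_pos).congr
    (.of_forall fun w => ?_)
  beta_reduce
  rw [norm_mul, norm_mul, norm_pow, norm_pow, RCLike.norm_conj, norm_fsWt, one_mul,
    sub_eq_add_neg, Real.exp_add]
  ring

lemma integral_pow_mul_conj_pow_mul_fsWt (p q : ℕ) :
    ∫ w : ℂ, w ^ p * starRingEnd ℂ w ^ q * fsWt m w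
      = if p = q then (Real.pi : ℂ) * (p + m).factorial else 0 := by
  split_ifs with hpq
  · subst hpq
    have radial (w : ℂ) : w ^ p * starRingEnd ℂ w ^ p * fsWt m w
        = ((‖w‖ ^ (2 * (p + m)) * Real.exp (-‖w‖ ^ 2) : ℝ) : ℂ) := by
      rw [← mul_pow, Complex.mul_conj', fsWt]
      push_cast
      ring
    simp only [radial]
    rw [integral_complex_ofReal, integral_norm_pow_two_mul_mul_exp_neg_norm_sq]
    push_cast
    rfl
  · exact integral_pow_mul_conj_pow_mul_radial_eq_zero
      (fun t => (t : ℂ) ^ (2 * m) * (Real.exp (-t ^ 2) : ℂ)) hpq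

end Weight

lemma hasSum_pow_div_factorial (x : ℝ) :
    HasSum (fun j : ℕ => x ^ j / j.factorial) (Real.exp x) := by
  rw [Real.exp_eq_exp_ℝ]
  exact NormedSpace.expSeries_div_hasSum_exp x

section Kernel

variable (m : ℕ) (z : ℂ)

lemma norm_fsKernel_term_le (w : ℂ) (j : ℕ) :
    ‖((m.factorial : ℂ) / ((j + m).factorial : ℂ)) * (z * starRingEnd ℂ w) ^ j‖
      ≤ (‖z‖ * ‖w‖) ^ j / j.factorial := by
  have coeff_le : (m.factorial : ℝ) / (j + m).factorial ≤ 1 / j.factorial := by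
    rw [div_le_div_iff₀ (by positivity) (by positivity), one_mul, mul_comm]
    exact_mod_cast Nat.le_of_dvd (Nat.factorial_pos _)
      (Nat.factorial_mul_factorial_dvd_factorial_add j m)
  rw [norm_mul, norm_div, Complex.norm_natCast, Complex.norm_natCast, norm_pow, norm_mul,
    RCLike.norm_conj, ← one_div_mul_eq_div (j.factorial : ℝ)]
  gcongr

lemma hasSum_fsKernel (w : ℂ) :
    HasSum (fun j : ℕ => ((m.factorial : ℂ) / ((j + m).factorial : ℂ)) * (z * starRingEnd ℂ w) ^ j)
      (fsKernel m z w) :=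
  (Summable.of_norm_bounded (Real.summable_pow_div_factorial (‖z‖ * ‖w‖))
    (norm_fsKernel_term_le m z w)).hasSum

lemma norm_fsKernel_le (w : ℂ) : ‖fsKernel m z w‖ ≤ Real.exp (‖z‖ * ‖w‖) :=
  tsum_of_norm_bounded (hasSum_pow_div_factorial _) (norm_fsKernel_term_le m z w)

lemma measurable_fsKernel : Measurable (fsKernel m z) :=
  measurable_of_tendsto_metrizable
    (fun J => Continuous.measurable (by fun_prop :
      Continuous fun w => ∑ j ∈ Finset.range J,
        ((m.factorial : ℂ) / ((j + m).factorial : ℂ)) * (z * starRingEnd ℂ w) ^ j))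
    (tendsto_pi_nhds.mpr fun w => (hasSum_fsKernel m z w).tendsto_sum_nat)

variable {m z} {μ : Measure ℂ} {G : ℂ → ℂ}

lemma integrable_mul_fsKernel (hG : AEStronglyMeasurable G μ)
    (hGexp : Integrable (fun w => ‖G w‖ * Real.exp (‖z‖ * ‖w‖)) μ) :
    Integrable (fun w => G w * fsKernel m z w) μ := by
  refine hGexp.mono' (hG.mul (measurable_fsKernel m z).aestronglyMeasurable)
    (.of_forall fun w => ?_)
  rw [norm_mul]
  gcongr
  exact norm_fsKernel_le m z w

lemma hasSum_integral_mul_fsKernel (hG : AEStronglyMeasurable G μ)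
    (hGexp : Integrable (fun w => ‖G w‖ * Real.exp (‖z‖ * ‖w‖)) μ) :
    HasSum (fun j : ℕ => ((m.factorial : ℂ) / ((j + m).factorial : ℂ)) * z ^ j *
        ∫ w, G w * starRingEnd ℂ w ^ j ∂μ)
      (∫ w, G w * fsKernel m z w ∂μ) := by
  have exp_series (w : ℂ) :
      HasSum (fun j : ℕ => ‖G w‖ * ((‖z‖ * ‖w‖) ^ j / j.factorial))
        (‖G w‖ * Real.exp (‖z‖ * ‖w‖)) :=
    (hasSum_pow_div_factorial _).mul_left _
  have termwise := hasSum_integral_of_dominated_convergence (μ := μ)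
    (F := fun j w => G w *
      (((m.factorial : ℂ) / ((j + m).factorial : ℂ)) * (z * starRingEnd ℂ w) ^ j))
    (fun j w => ‖G w‖ * ((‖z‖ * ‖w‖) ^ j / j.factorial))
    (fun j => hG.mul (Continuous.aestronglyMeasurable (by fun_prop)))
    (fun j => .of_forall fun w => by
      rw [norm_mul]
      gcongr
      exact norm_fsKernel_term_le m z w j)
    (.of_forall fun w => (exp_series w).summable)
    (by simpa only [fun w => (exp_series w).tsum_eq] using hGexp)
    (.of_forall fun w => (hasSum_fsKernel m z w).mul_left _)
  convert! termwise using 2 with j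
  rw [← integral_const_mul]
  congr with w
  ring

end Kernel

section Toeplitz

variable (m : ℕ) (z : ℂ)

lemma integrable_pow_mul_conj_pow_mul_fsWt_mul_fsKernel (p q : ℕ) :
    Integrable fun w : ℂ => w ^ p * starRingEnd ℂ w ^ q * fsWt m w * fsKernel m z w :=
  integrable_mul_fsKernel (Continuous.aestronglyMeasurable (by fun_prop))
    (integrable_norm_pow_mul_conj_pow_mul_fsWt_mul_exp m p q ‖z‖)

lemma integral_pow_mul_conj_pow_mul_fsWt_mul_fsKernel (p q : ℕ) :
    ∫ w : ℂ, w ^ p * starRingEnd ℂ w ^ q * fsWt m w * fsKernel m z w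
      = if q ≤ p then
          Real.pi * m.factorial * (((p + m).factorial : ℂ) / (p + m - q).factorial) * z ^ (p - q)
        else 0 := by
  have series := hasSum_integral_mul_fsKernel (m := m) (z := z) (μ := volume)
    (G := fun w => w ^ p * starRingEnd ℂ w ^ q * fsWt m w)
    (Continuous.aestronglyMeasurable (by fun_prop))
    (integrable_norm_pow_mul_conj_pow_mul_fsWt_mul_exp m p q ‖z‖)
  have moment (j : ℕ) : ∫ w : ℂ, w ^ p * starRingEnd ℂ w ^ q * fsWt m w * starRingEnd ℂ w ^ j
      = if p = q + j then (Real.pi : ℂ) * (p + m).factorial else 0 := by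
    rw [← integral_pow_mul_conj_pow_mul_fsWt]
    congr with w
    ring
  simp only [moment] at series
  rw [← series.tsum_eq]
  split_ifs with hqp
  · rw [tsum_eq_single (p - q) fun j hj => by rw [if_neg (by lia), mul_zero],
      if_pos (by lia), show p - q + m = p + m - q by lia]
    ring
  · simp only [show ∀ j, p ≠ q + j by lia, if_false, mul_zero, tsum_zero]

lemma fsToeplitz_finset_sum {ι : Type*} (s : Finset ι) (a : ι → ℂ) (g : ι → ℂ → ℂ) (ψ : ℂ → ℂ)
    (hint : ∀ k ∈ s, Integrable fun w => ψ w * g k w * fsKernel m z w * fsWt m w) :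
    fsToeplitz m ψ (fun w => ∑ k ∈ s, a k * g k w) z = ∑ k ∈ s, a k * fsToeplitz m ψ (g k) z := by
  have expand (w : ℂ) : ψ w * (∑ k ∈ s, a k * g k w) * fsKernel m z w * fsWt m w
      = ∑ k ∈ s, a k * (ψ w * g k w * fsKernel m z w * fsWt m w) := by
    simp only [Finset.mul_sum, Finset.sum_mul]
    exact Finset.sum_congr rfl fun k _ => by ring
  simp only [fsToeplitz, expand]
  rw [integral_finsetSum s fun k hk => (hint k hk).const_mul _, Finset.mul_sum]
  refine Finset.sum_congr rfl fun k _ => ?_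
  rw [integral_const_mul]
  ring

lemma fsToeplitz_conj_pow_pow (n k : ℕ) :
    fsToeplitz m (fun w => starRingEnd ℂ w ^ n) (fun w => w ^ k) z
      = if n ≤ k then ((k + m).factorial : ℂ) / (k + m - n).factorial * z ^ (k - n) else 0 := by
  have hπ : (Real.pi : ℂ) ≠ 0 := Complex.ofReal_ne_zero.mpr Real.pi_ne_zero
  have hm : (m.factorial : ℂ) ≠ 0 := Nat.cast_ne_zero.mpr m.factorial_ne_zero
  have reorder (w : ℂ) : starRingEnd ℂ w ^ n * w ^ k * fsKernel m z w * fsWt m w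
      = w ^ k * starRingEnd ℂ w ^ n * fsWt m w * fsKernel m z w := by ring
  simp only [fsToeplitz, reorder]
  rw [integral_pow_mul_conj_pow_mul_fsWt_mul_fsKernel, mul_ite, mul_zero]
  congr 1
  field_simp

end Toeplitz

theorem stmt9 (m n N : ℕ) (a : ℕ → ℂ) (f : ℂ → ℂ)
    (hf : f = fun z => ∑ k ∈ Finset.range (N + 1), a k * z ^ k) :
    ∀ z : ℂ, fsToeplitz m (fun w => (starRingEnd ℂ w) ^ n) f z =
      ∑ k ∈ Finset.Icc n N,
        a k * (((k + m).factorial : ℂ) / ((k + m - n).factorial : ℂ)) * z ^ (k - n) := by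
  intro z
  subst hf
  have hint (k : ℕ) :
      Integrable fun w => starRingEnd ℂ w ^ n * w ^ k * fsKernel m z w * fsWt m w :=
    (integrable_pow_mul_conj_pow_mul_fsWt_mul_fsKernel m z k n).congr (.of_forall fun w => by ring)
  have hIcc : (Finset.range (N + 1)).filter (n ≤ ·) = Finset.Icc n N := by
    ext k
    simp only [Finset.mem_filter, Finset.mem_range, Finset.mem_Icc]
    lia
  rw [fsToeplitz_finset_sum m z _ _ _ _ fun k _ => hint k]
  simp only [fsToeplitz_conj_pow_pow, mul_ite, mul_zero]
  rw [← Finset.sum_filter, hIcc]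
  exact Finset.sum_congr rfl fun k _ => (mul_assoc _ _ _).symm
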